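/- Let n ≥ 1 and p ∈ [1, 2). There exists a sequence of centered probability measures dμ_k = f_k dγ on ℝⁿ, each with finite second moment, such that lim_{k→∞} δ(μ_k) = 0 and lim_{k→∞} W_p(μ_k, γ) = ∞. -/

import Mathlib

/-!
The measures are mixtures `μ = (1 - t) γ(· - b) + t γ(· - c)` of two translates of the Gaussian,
centered by the choice `b = -t R e`, `c = (1 - t) R e` with `|e| = 1`; here `t → 0` and `t R → ∞`.

Each translate has zero deficit. Mixing changes the deficit by little in either direction:
* the relative entropy of the mixture lies between `S / 2 - h(t)` and `S / 2`, where
  `S = (1 - t) |b|² + t |c|²` and `h` is the binary entropy (`relEnt_mix_mem`);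
* the Fisher information lies between `S - R² exp (-R² / 8)` and `S` (`fisherInfo_mix_mem`),
  because the cross term is bounded by the overlap of the two Gaussians.

Hence `-R² exp (-R² / 8) / 2 ≤ δ(μ) ≤ h(t)`, and both bounds tend to `0`; the logarithmic Sobolev
inequality itself is not needed. On the other hand the first moment of `μ` is at least
`t |c| = t (1 - t) R → ∞`, and `W_p ^ p` is at least the difference of the first moments of `μ`
and `γ` minus one (`le_wasserstein`), so `W_p(μ, γ) → ∞`.
-/

open MeasureTheory Filter Real Topology

noncomputable section

/-- Euclidean space `ℝⁿ`. -/
abbrev En (n : ℕ) := EuclideanSpace ℝ (Fin n)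

/-- The standard Gaussian measure `dγ = (2π)^{-n/2} e^{-|x|²/2} dx` on `ℝⁿ`. -/
def stdGauss (n : ℕ) : Measure (En n) :=
  (volume : Measure (En n)).withDensity
    (fun x => ENNReal.ofReal ((2 * π) ^ (-(n : ℝ) / 2) * Real.exp (-‖x‖ ^ 2 / 2)))

/-- The probability measure `dμ = f dγ` with density `f` with respect to the Gaussian. -/
def densMeasure {n : ℕ} (f : En n → ℝ) : Measure (En n) :=
  (stdGauss n).withDensity (fun x => ENNReal.ofReal (f x))

/-- Relative entropy `H(μ) = ∫ f log f dγ` of `dμ = f dγ`. -/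
def relEnt {n : ℕ} (f : En n → ℝ) : ℝ :=
  ∫ x, f x * Real.log (f x) ∂(stdGauss n)

/-- Fisher information `I(μ) = ∫ |∇f|²/f dγ` of `dμ = f dγ`. -/
def fisherInfo {n : ℕ} (f : En n → ℝ) : ℝ :=
  ∫ x, ‖gradient f x‖ ^ 2 / f x ∂(stdGauss n)

/-- Deficit of the logarithmic Sobolev inequality, `δ(μ) = I(μ)/2 − H(μ)`. -/
def lsiDeficit {n : ℕ} (f : En n → ℝ) : ℝ :=
  fisherInfo f / 2 - relEnt f

/-- The `p`-th moment `m_p(μ) = ∫ |x|^p dμ`. -/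
def moment {n : ℕ} (p : ℝ) (μ : Measure (En n)) : ℝ := ∫ x, ‖x‖ ^ p ∂μ

/-- A measure is centered if `∫ x dμ = 0`. -/
def IsCentered {n : ℕ} (μ : Measure (En n)) : Prop := (∫ x, x ∂μ) = 0

/-- `π'` is a coupling of `μ` and `ν`. -/
def IsCoupling {n : ℕ} (π' : Measure (En n × En n)) (μ ν : Measure (En n)) : Prop :=
  IsProbabilityMeasure π' ∧ π'.map Prod.fst = μ ∧ π'.map Prod.snd = ν

/-- Wasserstein distance of order `p`:
`W_p(μ,ν) = inf_π (∫∫ |x−y|^p dπ)^{1/p}` over couplings `π`. -/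
def wasserstein {n : ℕ} (p : ℝ) (μ ν : Measure (En n)) : ℝ :=
  ((⨅ (π' : Measure (En n × En n)) (_ : IsCoupling π' μ ν),
      ∫⁻ z, ENNReal.ofReal (‖z.1 - z.2‖ ^ p) ∂π') ^ (1 / p)).toReal

/-- Deficit of Talagrand's inequality, `δ_Tal(μ) = 2H(μ) − W₂²(μ,γ)` for `dμ = f dγ`. -/
def talDeficit {n : ℕ} (f : En n → ℝ) : ℝ :=
  2 * relEnt f - wasserstein 2 (densMeasure f) (stdGauss n) ^ 2

/-- The `L^p(dμ)` norm of a real function. -/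
def LpNorm {n : ℕ} (p : ℝ) (μ : Measure (En n)) (u : En n → ℝ) : ℝ :=
  (∫ x, |u x| ^ p ∂μ) ^ (1 / p)

/-! ### The standard Gaussian measure -/

lemma integrable_exp_neg_sq_norm {n : ℕ} {b : ℝ} (hb : 0 < b) :
    Integrable (fun x : En n => Real.exp (-b * ‖x‖ ^ 2)) := by
  by_contra h
  have h1 := GaussianFourier.integral_rexp_neg_mul_sq_norm (V := En n) hb
  rw [integral_undef h] at h1
  have : 0 < (π / b) ^ (Module.finrank ℝ (En n) / 2 : ℝ) := by positivity
  linarith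

lemma measurable_gaussDensity (n : ℕ) : Measurable (fun x : En n =>
    ENNReal.ofReal ((2 * π) ^ (-(n : ℝ) / 2) * Real.exp (-‖x‖ ^ 2 / 2))) := by
  fun_prop

instance isProbabilityMeasure_stdGauss (n : ℕ) : IsProbabilityMeasure (stdGauss n) := by
  constructor
  rw [stdGauss, withDensity_apply _ MeasurableSet.univ, Measure.restrict_univ]
  have h2 : ∀ x : En n, -‖x‖ ^ 2 / 2 = -(1 / 2 : ℝ) * ‖x‖ ^ 2 := fun x => by ring
  simp_rw [h2]
  rw [← ofReal_integral_eq_lintegral_ofReal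
    ((integrable_exp_neg_sq_norm (by norm_num)).const_mul _)
    (Eventually.of_forall fun x => by positivity), integral_const_mul,
    GaussianFourier.integral_rexp_neg_mul_sq_norm (by norm_num)]
  rw [finrank_euclideanSpace_fin, show π / (1 / 2) = 2 * π by ring, ← Real.rpow_add (by positivity)]
  simp [neg_div]

lemma integrable_stdGauss_iff {n : ℕ} {E : Type*} [NormedAddCommGroup E] [NormedSpace ℝ E]
    {g : En n → E} : Integrable g (stdGauss n) ↔ Integrable
      (fun x => ((2 * π) ^ (-(n : ℝ) / 2) * Real.exp (-‖x‖ ^ 2 / 2)) • g x) := by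
  rw [stdGauss, integrable_withDensity_iff_integrable_smul' (measurable_gaussDensity n)
    (Eventually.of_forall fun x => ENNReal.ofReal_lt_top)]
  refine integrable_congr (Eventually.of_forall fun x => ?_)
  simp only
  rw [ENNReal.toReal_ofReal (by positivity)]

lemma integrable_sq_norm_stdGauss (n : ℕ) :
    Integrable (fun x : En n => ‖x‖ ^ 2) (stdGauss n) := by
  rw [integrable_stdGauss_iff]
  refine Integrable.mono' (((integrable_exp_neg_sq_norm (n := n)
    (b := 1 / 4) (by norm_num)).const_mul ((2 * π) ^ (-(n : ℝ) / 2) * 4)))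
    (by fun_prop) (Eventually.of_forall fun x => ?_)
  have h1 : ‖x‖ ^ 2 ≤ 4 * Real.exp (‖x‖ ^ 2 / 4) := by
    have := Real.add_one_le_exp (‖x‖ ^ 2 / 4)
    linarith
  have h2 : Real.exp (-(1 / 4) * ‖x‖ ^ 2)
      = Real.exp (-‖x‖ ^ 2 / 2) * Real.exp (‖x‖ ^ 2 / 4) := by
    rw [← Real.exp_add]; congr 1; ring
  rw [Real.norm_of_nonneg (by positivity), smul_eq_mul, h2, mul_assoc, mul_assoc]
  have : 0 ≤ (2 * π) ^ (-(n : ℝ) / 2) := by positivity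
  refine mul_le_mul_of_nonneg_left ?_ this
  calc _ ≤ Real.exp (-‖x‖ ^ 2 / 2) * (4 * Real.exp (‖x‖ ^ 2 / 4)) := by gcongr
    _ = _ := by ring

lemma integrable_id_stdGauss (n : ℕ) : Integrable (fun x : En n => x) (stdGauss n) := by
  refine Integrable.mono' ((integrable_const (1 : ℝ)).add (integrable_sq_norm_stdGauss n))
    (by fun_prop) (Eventually.of_forall fun x => ?_)
  simp only [Pi.add_apply]
  nlinarith [sq_nonneg (‖x‖ - 1), norm_nonneg x]

lemma isCentered_stdGauss (n : ℕ) : ∫ x : En n, x ∂(stdGauss n) = 0 := by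
  have h : ∫ x : En n, x ∂(stdGauss n) = ∫ x : En n,
      ((2 * π) ^ (-(n : ℝ) / 2) * Real.exp (-‖x‖ ^ 2 / 2)) • x := by
    rw [stdGauss, integral_withDensity_eq_integral_toReal_smul (measurable_gaussDensity n)
      (Eventually.of_forall fun x => ENNReal.ofReal_lt_top)]
    refine integral_congr_ae (Eventually.of_forall fun x => ?_)
    simp only
    rw [ENNReal.toReal_ofReal (by positivity)]
  have h2 := integral_neg_eq_self (fun x : En n =>
      ((2 * π) ^ (-(n : ℝ) / 2) * Real.exp (-‖x‖ ^ 2 / 2)) • x) volume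
  simp only [norm_neg, smul_neg, integral_neg] at h2
  rw [h]
  set v := ∫ x : En n, ((2 * π) ^ (-(n : ℝ) / 2) * Real.exp (-‖x‖ ^ 2 / 2)) • x
  have h3 : (2 : ℝ) • v = 0 := by
    rw [two_smul]; nth_rewrite 1 [← h2]; simp
  simpa using h3

/-! ### Translates of the Gaussian -/

/-- The density with respect to `γ` of the translate of `γ` by `b` (Cameron–Martin). -/
def shiftDensity {n : ℕ} (b x : En n) : ℝ := Real.exp (inner ℝ b x - ‖b‖ ^ 2 / 2)

lemma shiftDensity_pos {n : ℕ} (b x : En n) : 0 < shiftDensity b x := Real.exp_pos _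

lemma continuous_shiftDensity {n : ℕ} (b : En n) : Continuous (shiftDensity b) := by
  unfold shiftDensity; fun_prop

lemma log_shiftDensity {n : ℕ} (b x : En n) :
    Real.log (shiftDensity b x) = inner ℝ b x - ‖b‖ ^ 2 / 2 := Real.log_exp _

lemma densMeasure_shiftDensity {n : ℕ} (b : En n) :
    densMeasure (shiftDensity b) = (stdGauss n).map (fun x => x + b) := by
  have hm : Measurable (fun x : En n => x + b) := by fun_prop
  ext s hs
  rw [Measure.map_apply hm hs, densMeasure, stdGauss, ← withDensity_mul _
    (measurable_gaussDensity n) (continuous_shiftDensity b).measurable.ennreal_ofReal,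
    withDensity_apply _ hs, withDensity_apply _ (hm hs), ← lintegral_indicator hs,
    ← lintegral_indicator (hm hs), ← lintegral_add_right_eq_self _ b]
  refine lintegral_congr fun x => ?_
  by_cases hx : x + b ∈ s
  · rw [Set.indicator_of_mem hx, Set.indicator_of_mem (by exact hx)]
    rw [Pi.mul_apply, ← ENNReal.ofReal_mul (by positivity), mul_assoc, shiftDensity, ← Real.exp_add]
    congr 3
    rw [norm_add_sq_real, inner_add_right, real_inner_self_eq_norm_sq, real_inner_comm]
    ring
  · rw [Set.indicator_of_notMem hx, Set.indicator_of_notMem (by exact hx)]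

section shift

variable {n : ℕ} {E : Type*} [NormedAddCommGroup E] [NormedSpace ℝ E]

lemma integrable_shift_iff (b : En n) {g : En n → E} :
    Integrable (fun x => shiftDensity b x • g x) (stdGauss n) ↔
      Integrable (fun x => g (x + b)) (stdGauss n) := by
  have h1 : Integrable g (densMeasure (shiftDensity b)) ↔
      Integrable (fun x => shiftDensity b x • g x) (stdGauss n) := by
    rw [densMeasure, integrable_withDensity_iff_integrable_smul'
      (continuous_shiftDensity b).measurable.ennreal_ofReal
      (Eventually.of_forall fun x => ENNReal.ofReal_lt_top)]
    refine integrable_congr (Eventually.of_forall fun x => ?_)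
    simp only
    rw [ENNReal.toReal_ofReal (shiftDensity_pos b x).le]
  rw [← h1, densMeasure_shiftDensity,
    (measurableEmbedding_addRight b).integrable_map_iff]
  rfl

lemma integral_shift (b : En n) (g : En n → E) :
    ∫ x, shiftDensity b x • g x ∂(stdGauss n) = ∫ x, g (x + b) ∂(stdGauss n) := by
  have h1 : ∫ x, g x ∂(densMeasure (shiftDensity b)) =
      ∫ x, shiftDensity b x • g x ∂(stdGauss n) := by
    rw [densMeasure, integral_withDensity_eq_integral_toReal_smul
      (continuous_shiftDensity b).measurable.ennreal_ofReal
      (Eventually.of_forall fun x => ENNReal.ofReal_lt_top)]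
    refine integral_congr_ae (Eventually.of_forall fun x => ?_)
    simp only
    rw [ENNReal.toReal_ofReal (shiftDensity_pos b x).le]
  rw [← h1, densMeasure_shiftDensity, (measurableEmbedding_addRight b).integral_map]

end shift

lemma integrable_shiftDensity {n : ℕ} (b : En n) : Integrable (shiftDensity b) (stdGauss n) := by
  simpa using (integrable_shift_iff b (g := fun _ => (1 : ℝ))).2 (integrable_const _)

lemma integral_shiftDensity {n : ℕ} (b : En n) : ∫ x, shiftDensity b x ∂(stdGauss n) = 1 := by
  simpa using integral_shift b (fun _ => (1 : ℝ))

lemma integrable_shiftDensity_smul_id {n : ℕ} (b : En n) :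
    Integrable (fun x => shiftDensity b x • x) (stdGauss n) :=
  (integrable_shift_iff b (g := fun x => x)).2 ((integrable_id_stdGauss n).add (integrable_const b))

lemma integral_shiftDensity_smul_id {n : ℕ} (b : En n) :
    ∫ x, shiftDensity b x • x ∂(stdGauss n) = b := by
  rw [integral_shift b (fun x => x), integral_add (integrable_id_stdGauss n) (integrable_const b),
    isCentered_stdGauss]
  simp

lemma integrable_shiftDensity_mul_log {n : ℕ} (b : En n) :
    Integrable (fun x => shiftDensity b x * Real.log (shiftDensity b x)) (stdGauss n) := by
  refine (integrable_shift_iff b (g := fun x => Real.log (shiftDensity b x))).2 ?_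
  simp_rw [log_shiftDensity, inner_add_right]
  exact (((integrable_id_stdGauss n).const_inner b).add (integrable_const _)).sub
    (integrable_const _)

lemma integral_shiftDensity_mul_log {n : ℕ} (b : En n) :
    ∫ x, shiftDensity b x * Real.log (shiftDensity b x) ∂(stdGauss n) = ‖b‖ ^ 2 / 2 := by
  have hi := (integrable_id_stdGauss n).const_inner (𝕜 := ℝ) b
  have := integral_shift b (fun x => Real.log (shiftDensity b x))
  simp only [smul_eq_mul] at this
  rw [this]
  simp_rw [log_shiftDensity, inner_add_right, add_sub_assoc]
  rw [integral_add hi (integrable_const _), integral_inner (integrable_id_stdGauss n),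
    isCentered_stdGauss, inner_zero_right, real_inner_self_eq_norm_sq]
  simp
  ring

lemma integrable_shiftDensity_mul_sq_norm {n : ℕ} (b : En n) :
    Integrable (fun x => shiftDensity b x * ‖x‖ ^ 2) (stdGauss n) := by
  refine (integrable_shift_iff b (g := fun x => ‖x‖ ^ 2)).2 ?_
  refine Integrable.mono' (((integrable_sq_norm_stdGauss n).const_mul 2).add
    (integrable_const (2 * ‖b‖ ^ 2))) (by fun_prop) (Eventually.of_forall fun x => ?_)
  simp only [Pi.add_apply]
  rw [Real.norm_of_nonneg (by positivity)]
  nlinarith [norm_add_le x b, norm_nonneg (x + b), sq_nonneg (‖x‖ - ‖b‖), norm_nonneg x,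
    norm_nonneg b]

lemma hasGradientAt_shiftDensity {n : ℕ} (b x : En n) :
    HasGradientAt (shiftDensity b) (shiftDensity b x • b) x := by
  rw [hasGradientAt_iff_hasFDerivAt]
  have h : HasFDerivAt (fun y : En n => inner ℝ b y - ‖b‖ ^ 2 / 2) (innerSL ℝ b) x :=
    ((innerSL ℝ b).hasFDerivAt).sub_const _
  have h2 := h.exp
  convert! h2 using 1
  ext y
  simp [shiftDensity]

/-- The density with respect to `γ` of the mixture `(1 - t) γ(· - b) + t γ(· - c)`. -/
def mixDensity {n : ℕ} (t : ℝ) (b c x : En n) : ℝ :=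
  (1 - t) * shiftDensity b x + t * shiftDensity c x

/-! ### Entropy, Fisher information and deficit of a two-component mixture -/

section mixture

variable {n : ℕ} {t : ℝ}

lemma mixDensity_pos (ht0 : 0 < t) (ht1 : t < 1) (b c x : En n) :
    0 < mixDensity t b c x :=
  add_pos (mul_pos (by linarith) (shiftDensity_pos b x)) (mul_pos ht0 (shiftDensity_pos c x))

lemma continuous_mixDensity (b c : En n) : Continuous (mixDensity t b c) :=
  ((continuous_shiftDensity b).const_mul _).add ((continuous_shiftDensity c).const_mul _)

lemma integrable_mixDensity (b c : En n) : Integrable (mixDensity t b c) (stdGauss n) :=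
  ((integrable_shiftDensity b).const_mul _).add ((integrable_shiftDensity c).const_mul _)

lemma integral_mixDensity (b c : En n) : ∫ x, mixDensity t b c x ∂(stdGauss n) = 1 := by
  unfold mixDensity
  rw [integral_add ((integrable_shiftDensity b).const_mul _)
    ((integrable_shiftDensity c).const_mul _), integral_const_mul, integral_const_mul,
    integral_shiftDensity, integral_shiftDensity]
  ring

lemma isProbabilityMeasure_mix (ht0 : 0 < t) (ht1 : t < 1) (b c : En n) :
    IsProbabilityMeasure (densMeasure (mixDensity t b c)) := by
  constructor
  rw [densMeasure, withDensity_apply _ MeasurableSet.univ, Measure.restrict_univ,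
    ← ofReal_integral_eq_lintegral_ofReal (integrable_mixDensity b c)
    (Eventually.of_forall fun x => (mixDensity_pos ht0 ht1 b c x).le), integral_mixDensity]
  simp

lemma integrable_mix_iff (ht0 : 0 < t) (ht1 : t < 1) (b c : En n)
    {E : Type*} [NormedAddCommGroup E] [NormedSpace ℝ E] {g : En n → E} :
    Integrable g (densMeasure (mixDensity t b c)) ↔
      Integrable (fun x => mixDensity t b c x • g x) (stdGauss n) := by
  rw [densMeasure, integrable_withDensity_iff_integrable_smul'
    (continuous_mixDensity b c).measurable.ennreal_ofReal
    (Eventually.of_forall fun x => ENNReal.ofReal_lt_top)]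
  refine integrable_congr (Eventually.of_forall fun x => ?_)
  simp only
  rw [ENNReal.toReal_ofReal (mixDensity_pos ht0 ht1 b c x).le]

lemma integral_mix (ht0 : 0 < t) (ht1 : t < 1) (b c : En n)
    {E : Type*} [NormedAddCommGroup E] [NormedSpace ℝ E] (g : En n → E) :
    ∫ x, g x ∂(densMeasure (mixDensity t b c)) =
      ∫ x, mixDensity t b c x • g x ∂(stdGauss n) := by
  rw [densMeasure, integral_withDensity_eq_integral_toReal_smul
    (continuous_mixDensity b c).measurable.ennreal_ofReal
    (Eventually.of_forall fun x => ENNReal.ofReal_lt_top)]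
  refine integral_congr_ae (Eventually.of_forall fun x => ?_)
  simp only
  rw [ENNReal.toReal_ofReal (mixDensity_pos ht0 ht1 b c x).le]

lemma integral_id_mix (ht0 : 0 < t) (ht1 : t < 1) (b c : En n) :
    ∫ x, x ∂(densMeasure (mixDensity t b c)) = (1 - t) • b + t • c := by
  rw [integral_mix ht0 ht1]
  simp_rw [mixDensity, add_smul, mul_smul]
  have ib : Integrable (fun x => (1 - t) • shiftDensity b x • x) (stdGauss n) :=
    (integrable_shiftDensity_smul_id b).smul (1 - t)
  have ic : Integrable (fun x => t • shiftDensity c x • x) (stdGauss n) :=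
    (integrable_shiftDensity_smul_id c).smul t
  rw [integral_add ib ic, integral_smul, integral_smul,
    integral_shiftDensity_smul_id, integral_shiftDensity_smul_id]

lemma integrable_sq_norm_mix (ht0 : 0 < t) (ht1 : t < 1) (b c : En n) :
    Integrable (fun x => ‖x‖ ^ 2) (densMeasure (mixDensity t b c)) := by
  rw [integrable_mix_iff ht0 ht1]
  refine (((integrable_shiftDensity_mul_sq_norm b).const_mul (1 - t)).add
    ((integrable_shiftDensity_mul_sq_norm c).const_mul t)).congr (Eventually.of_forall fun x => ?_)
  simp only [mixDensity, Pi.add_apply, smul_eq_mul]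
  ring

lemma integrable_norm_mix (ht0 : 0 < t) (ht1 : t < 1) (b c : En n) :
    Integrable (fun x => ‖x‖) (densMeasure (mixDensity t b c)) := by
  have := isProbabilityMeasure_mix ht0 ht1 b c
  refine Integrable.mono' ((integrable_const (1 : ℝ)).add (integrable_sq_norm_mix ht0 ht1 b c))
    (by fun_prop) (Eventually.of_forall fun x => ?_)
  simp only [Pi.add_apply, norm_norm]
  nlinarith [sq_nonneg (‖x‖ - 1), norm_nonneg x]

lemma le_integral_norm_mix (ht0 : 0 < t) (ht1 : t < 1) (b c : En n) :
    t * ‖c‖ ≤ ∫ x, ‖x‖ ∂(densMeasure (mixDensity t b c)) := by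
  rw [integral_mix ht0 ht1]
  have h1 : ‖c‖ ≤ ∫ x, ‖shiftDensity c x • x‖ ∂(stdGauss n) := by
    conv_lhs => rw [← integral_shiftDensity_smul_id c]
    exact norm_integral_le_integral_norm _
  calc t * ‖c‖ ≤ t * ∫ x, ‖shiftDensity c x • x‖ ∂(stdGauss n) := by gcongr
    _ = ∫ x, t * ‖shiftDensity c x • x‖ ∂(stdGauss n) := (integral_const_mul _ _).symm
    _ ≤ _ := by
      refine integral_mono ((integrable_shiftDensity_smul_id c).norm.const_mul t)
        ((integrable_mix_iff ht0 ht1 b c).1 (integrable_norm_mix ht0 ht1 b c)) fun x => ?_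
      simp only [norm_smul, smul_eq_mul]
      rw [Real.norm_of_nonneg (shiftDensity_pos c x).le, ← mul_assoc]
      refine mul_le_mul_of_nonneg_right ?_ (norm_nonneg x)
      have : 0 < (1 - t) * shiftDensity b x := mul_pos (by linarith) (shiftDensity_pos b x)
      unfold mixDensity
      linarith

/-- The upper bound is convexity of `u ↦ u log u`; the lower bound holds because the logarithm of
the mixture dominates the logarithm of each weighted component. The loss is exactly the Shannon
entropy of the weights. -/
lemma relEnt_mix_mem (ht0 : 0 < t) (ht1 : t < 1) (b c : En n) :
    ((1 - t) * ‖b‖ ^ 2 + t * ‖c‖ ^ 2) / 2 - binEntropy t ≤ relEnt (mixDensity t b c) ∧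
      relEnt (mixDensity t b c) ≤ ((1 - t) * ‖b‖ ^ 2 + t * ‖c‖ ^ 2) / 2 := by
  have h1t : 0 < 1 - t := by linarith
  set U : En n → ℝ := fun x => (1 - t) * (shiftDensity b x * Real.log (shiftDensity b x))
    + t * (shiftDensity c x * Real.log (shiftDensity c x)) with hU
  set V : En n → ℝ := fun x => ((1 - t) * Real.log (1 - t)) * shiftDensity b x
    + (t * Real.log t) * shiftDensity c x with hV
  have iUb := (integrable_shiftDensity_mul_log b).const_mul (1 - t)
  have iUc := (integrable_shiftDensity_mul_log c).const_mul t
  have iVb := (integrable_shiftDensity b).const_mul ((1 - t) * Real.log (1 - t))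
  have iVc := (integrable_shiftDensity c).const_mul (t * Real.log t)
  have iU : Integrable U (stdGauss n) := iUb.add iUc
  have iV : Integrable V (stdGauss n) := iVb.add iVc
  have eU : ∫ x, U x ∂(stdGauss n) = ((1 - t) * ‖b‖ ^ 2 + t * ‖c‖ ^ 2) / 2 := by
    rw [hU, integral_add iUb iUc, integral_const_mul, integral_const_mul,
      integral_shiftDensity_mul_log, integral_shiftDensity_mul_log]
    ring
  have eV : ∫ x, V x ∂(stdGauss n) = - binEntropy t := by
    rw [hV, integral_add iVb iVc, integral_const_mul, integral_const_mul,
      integral_shiftDensity, integral_shiftDensity, binEntropy, Real.log_inv, Real.log_inv]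
    ring
  have hup : ∀ x, mixDensity t b c x * Real.log (mixDensity t b c x) ≤ U x := fun x =>
    Real.convexOn_mul_log.2 (shiftDensity_pos b x).le (shiftDensity_pos c x).le h1t.le ht0.le
      (by ring)
  have hlow : ∀ x, U x + V x ≤ mixDensity t b c x * Real.log (mixDensity t b c x) := fun x => by
    have pb := shiftDensity_pos b x
    have pc := shiftDensity_pos c x
    have qb : 0 < (1 - t) * shiftDensity b x := by positivity
    have qc : 0 < t * shiftDensity c x := by positivity
    have l1 : Real.log (1 - t) + Real.log (shiftDensity b x)
        ≤ Real.log (mixDensity t b c x) := by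
      rw [← Real.log_mul h1t.ne' pb.ne']
      exact Real.log_le_log qb (by unfold mixDensity; linarith)
    have l2 : Real.log t + Real.log (shiftDensity c x)
        ≤ Real.log (mixDensity t b c x) := by
      rw [← Real.log_mul ht0.ne' pc.ne']
      exact Real.log_le_log qc (by unfold mixDensity; linarith)
    have m1 := mul_le_mul_of_nonneg_left l1 qb.le
    have m2 := mul_le_mul_of_nonneg_left l2 qc.le
    have : mixDensity t b c x * Real.log (mixDensity t b c x) =
        (1 - t) * shiftDensity b x * Real.log (mixDensity t b c x)
        + t * shiftDensity c x * Real.log (mixDensity t b c x) := by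
      rw [← add_mul]; rfl
    rw [this]
    simp only [hU, hV]
    linarith
  have im : Integrable (fun x => mixDensity t b c x * Real.log (mixDensity t b c x))
      (stdGauss n) := by
    refine integrable_of_le_of_le ?_ (Eventually.of_forall hlow) (Eventually.of_forall hup)
      (iU.add iV) iU
    exact ((continuous_mixDensity b c).measurable.mul
      (continuous_mixDensity b c).measurable.log).aestronglyMeasurable
  constructor
  · rw [sub_eq_add_neg, ← eU, ← eV, ← integral_add iU iV]
    exact integral_mono (iU.add iV) im hlow
  · rw [← eU]
    exact integral_mono im iU hup

/-- With `g₁, g₂` the weighted components, `g₁ g₂ / (g₁ + g₂)` is at most the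
geometric mean of the two Gaussian densities, which is again a shifted Gaussian density up to the
factor `exp (-|b - c|² / 8)`. -/
lemma cross_le (ht0 : 0 < t) (ht1 : t < 1) (b c : En n) (x : En n) :
    ((1 - t) * shiftDensity b x) * (t * shiftDensity c x) / mixDensity t b c x
      ≤ Real.exp (-‖b - c‖ ^ 2 / 8) * shiftDensity ((1 / 2 : ℝ) • (b + c)) x := by
  have h1t : 0 < 1 - t := by linarith
  have pb := shiftDensity_pos b x
  have pc := shiftDensity_pos c x
  have pm := mixDensity_pos ht0 ht1 b c x
  set s := Real.exp (-‖b - c‖ ^ 2 / 8) * shiftDensity ((1 / 2 : ℝ) • (b + c)) x with hs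
  have ps : 0 < s := mul_pos (Real.exp_pos _) (shiftDensity_pos _ _)
  -- `s` is the geometric mean of the two shifted densities.
  have hs2 : shiftDensity b x * shiftDensity c x = s ^ 2 := by
    rw [hs, shiftDensity, shiftDensity, shiftDensity, ← Real.exp_add, ← Real.exp_add,
      ← Real.exp_nat_mul, norm_smul, mul_pow, norm_add_sq_real, norm_sub_sq_real,
      inner_smul_left, inner_add_left]
    congr 1
    norm_num
    ring
  rw [div_le_iff₀ pm]
  have e1 : (1 - t) * shiftDensity b x * (t * shiftDensity c x) = (1 - t) * t * s ^ 2 := by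
    rw [← hs2]; ring
  have hq : 0 < (1 - t) * t := by positivity
  have hq1 : (1 - t) * t ≤ 1 := by nlinarith
  have e2 : (1 - t) * t * s ≤ mixDensity t b c x := by
    refine le_of_sq_le_sq ?_ pm.le
    have : (4 : ℝ) * ((1 - t) * t * s ^ 2) ≤ mixDensity t b c x ^ 2 := by
      rw [← e1]
      unfold mixDensity
      nlinarith [sq_nonneg ((1 - t) * shiftDensity b x - t * shiftDensity c x)]
    nlinarith [mul_le_mul_of_nonneg_right hq1 (show 0 ≤ (1 - t) * t * s ^ 2 by positivity)]
  rw [e1]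
  nlinarith [mul_le_mul_of_nonneg_left e2 ps.le]

/-- With `g₁, g₂` the weighted components,
`|∇f|² / f = g₁ |b|² + g₂ |c|² - g₁ g₂ / (g₁ + g₂) |b - c|²`, and the last term is controlled by
`cross_le`. -/
lemma fisherInfo_mix_mem (ht0 : 0 < t) (ht1 : t < 1) (b c : En n) :
    (1 - t) * ‖b‖ ^ 2 + t * ‖c‖ ^ 2 - Real.exp (-‖b - c‖ ^ 2 / 8) * ‖b - c‖ ^ 2
        ≤ fisherInfo (mixDensity t b c) ∧
      fisherInfo (mixDensity t b c) ≤ (1 - t) * ‖b‖ ^ 2 + t * ‖c‖ ^ 2 := by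
  have h1t : 0 < 1 - t := by linarith
  have hgrad : ∀ x, gradient (mixDensity t b c) x =
      ((1 - t) * shiftDensity b x) • b + (t * shiftDensity c x) • c := fun x => by
    have := ((hasGradientAt_shiftDensity b x).hasFDerivAt.const_mul (1 - t)).add
      ((hasGradientAt_shiftDensity c x).hasFDerivAt.const_mul t)
    refine HasGradientAt.gradient ?_
    rw [hasGradientAt_iff_hasFDerivAt]
    convert! this using 1
    simp [mul_smul]
  set U : En n → ℝ := fun x => ((1 - t) * ‖b‖ ^ 2) * shiftDensity b x
    + (t * ‖c‖ ^ 2) * shiftDensity c x with hU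
  set V : En n → ℝ := fun x => (Real.exp (-‖b - c‖ ^ 2 / 8) * ‖b - c‖ ^ 2)
    * shiftDensity ((1 / 2 : ℝ) • (b + c)) x with hV
  have iUb := (integrable_shiftDensity b).const_mul ((1 - t) * ‖b‖ ^ 2)
  have iUc := (integrable_shiftDensity c).const_mul (t * ‖c‖ ^ 2)
  have iU : Integrable U (stdGauss n) := iUb.add iUc
  have iV : Integrable V (stdGauss n) := (integrable_shiftDensity _).const_mul _
  have eU : ∫ x, U x ∂(stdGauss n) = (1 - t) * ‖b‖ ^ 2 + t * ‖c‖ ^ 2 := by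
    rw [hU, integral_add iUb iUc, integral_const_mul, integral_const_mul,
      integral_shiftDensity, integral_shiftDensity]
    ring
  have eV : ∫ x, V x ∂(stdGauss n) = Real.exp (-‖b - c‖ ^ 2 / 8) * ‖b - c‖ ^ 2 := by
    rw [hV, integral_const_mul, integral_shiftDensity, mul_one]
  have key : ∀ x, ‖gradient (mixDensity t b c) x‖ ^ 2 / mixDensity t b c x = U x -
      ((1 - t) * shiftDensity b x) * (t * shiftDensity c x) / mixDensity t b c x
        * ‖b - c‖ ^ 2 := fun x => by
    have pm := mixDensity_pos ht0 ht1 b c x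
    rw [hgrad, norm_add_sq_real, norm_sub_sq_real, norm_smul, norm_smul, inner_smul_left,
      inner_smul_right, mul_pow, mul_pow, Real.norm_eq_abs, Real.norm_eq_abs, sq_abs, sq_abs]
    field_simp
    simp only [hU, mixDensity, conj_trivial]
    ring
  have hup : ∀ x, ‖gradient (mixDensity t b c) x‖ ^ 2 / mixDensity t b c x ≤ U x := fun x => by
    have pb := shiftDensity_pos b x
    have pc := shiftDensity_pos c x
    have pm := mixDensity_pos ht0 ht1 b c x
    rw [key]
    refine sub_le_self _ ?_
    positivity
  have hlow : ∀ x, U x - V x ≤ ‖gradient (mixDensity t b c) x‖ ^ 2 / mixDensity t b c x :=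
    fun x => by
    rw [key]
    have := mul_le_mul_of_nonneg_right (cross_le ht0 ht1 b c x) (sq_nonneg ‖b - c‖)
    simp only [hV]
    linarith
  have im : Integrable (fun x => ‖gradient (mixDensity t b c) x‖ ^ 2 / mixDensity t b c x)
      (stdGauss n) := by
    refine integrable_of_le_of_le ?_ (Eventually.of_forall hlow) (Eventually.of_forall hup)
      (iU.sub iV) iU
    have hb := continuous_shiftDensity b
    have hc := continuous_shiftDensity c
    have hm := continuous_mixDensity (t := t) b c
    simp_rw [hgrad]
    have : Continuous fun x => ‖((1 - t) * shiftDensity b x) • b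
      + (t * shiftDensity c x) • c‖ ^ 2 := by fun_prop
    exact (this.measurable.div hm.measurable).aestronglyMeasurable
  constructor
  · rw [← eU, ← eV, ← integral_sub iU iV]
    exact integral_mono (iU.sub iV) im hlow
  · rw [← eU]
    exact integral_mono im iU hup

lemma lsiDeficit_mix_mem (ht0 : 0 < t) (ht1 : t < 1) (b c : En n) :
    -(Real.exp (-‖b - c‖ ^ 2 / 8) * ‖b - c‖ ^ 2) / 2 ≤ lsiDeficit (mixDensity t b c) ∧
      lsiDeficit (mixDensity t b c) ≤ binEntropy t := by
  have h1 := relEnt_mix_mem ht0 ht1 b c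
  have h2 := fisherInfo_mix_mem ht0 ht1 b c
  unfold lsiDeficit
  constructor <;> linarith [h1.1, h1.2, h2.1, h2.2]

end mixture

/-! ### A lower bound for the Wasserstein distance -/

/-- The bound comes from `|x| ≤ |x - y|^p + |y| + 1`, integrated against a coupling. The second
moments ensure that the infimum in `wasserstein` is finite, so that `toReal` does not turn it
into `0`. -/
lemma le_wasserstein {n : ℕ} {p : ℝ} (hp1 : 1 ≤ p) (hp2 : p ≤ 2) (μ ν : Measure (En n))
    [IsProbabilityMeasure μ] [IsProbabilityMeasure ν]
    (hμ : Integrable (fun x => ‖x‖ ^ 2) μ) (hν : Integrable (fun x => ‖x‖ ^ 2) ν)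
    (hμ1 : Integrable (fun x => ‖x‖) μ) (hν1 : Integrable (fun x => ‖x‖) ν)
    {A : ℝ} (hA : 0 ≤ A) (h : A + ∫ x, ‖x‖ ∂ν + 1 ≤ ∫ x, ‖x‖ ∂μ) :
    A ^ (1 / p) ≤ wasserstein p μ ν := by
  have hp0 : 0 < p := by linarith
  unfold wasserstein
  set K := ⨅ (π' : Measure (En n × En n)) (_ : IsCoupling π' μ ν),
      ∫⁻ z, ENNReal.ofReal (‖z.1 - z.2‖ ^ p) ∂π' with hK
  have hKtop : K ≠ ⊤ := by
    have hc : IsCoupling (μ.prod ν) μ ν := by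
      refine ⟨inferInstance, ?_, ?_⟩
      · simp
      · simp
    have hle : K ≤ ∫⁻ z, ENNReal.ofReal (‖z.1 - z.2‖ ^ p) ∂(μ.prod ν) :=
      iInf₂_le (μ.prod ν) hc
    have hi : Integrable (fun z : En n × En n => 1 + 2 * ‖z.1‖ ^ 2 + 2 * ‖z.2‖ ^ 2)
        (μ.prod ν) :=
      ((integrable_const (1 : ℝ)).add ((hμ.comp_fst ν).const_mul 2)).add
        ((hν.comp_snd μ).const_mul 2)
    refine ne_top_of_le_ne_top hi.lintegral_lt_top.ne (hle.trans (lintegral_mono fun z => ?_))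
    refine ENNReal.ofReal_le_ofReal ?_
    have h1 : ‖z.1 - z.2‖ ^ p ≤ 1 + ‖z.1 - z.2‖ ^ 2 := by
      rcases le_total ‖z.1 - z.2‖ 1 with h | h
      · have := Real.rpow_le_one (norm_nonneg _) h hp0.le
        nlinarith [sq_nonneg ‖z.1 - z.2‖]
      · have := Real.rpow_le_rpow_of_exponent_le h hp2
        rw [Real.rpow_two] at this
        linarith
    have h2 : ‖z.1 - z.2‖ ^ 2 ≤ 2 * ‖z.1‖ ^ 2 + 2 * ‖z.2‖ ^ 2 := by
      nlinarith [norm_sub_le z.1 z.2, norm_nonneg (z.1 - z.2), sq_nonneg (‖z.1‖ - ‖z.2‖),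
        norm_nonneg z.1, norm_nonneg z.2]
    linarith
  have hAK : ENNReal.ofReal A ≤ K := by
    refine le_iInf₂ fun π' hc => ?_
    obtain ⟨hprob, hfst, hsnd⟩ := hc
    have hM : 0 ≤ ∫ x, ‖x‖ ∂ν := integral_nonneg fun x => norm_nonneg x
    have e1 : ENNReal.ofReal (∫ x, ‖x‖ ∂μ) = ∫⁻ z, ENNReal.ofReal ‖z.1‖ ∂π' := by
      rw [ofReal_integral_eq_lintegral_ofReal hμ1 (Eventually.of_forall fun x => norm_nonneg x),
        ← hfst, lintegral_map (by fun_prop) measurable_fst]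
    have e2 : ENNReal.ofReal (∫ x, ‖x‖ ∂ν) = ∫⁻ z, ENNReal.ofReal ‖z.2‖ ∂π' := by
      rw [ofReal_integral_eq_lintegral_ofReal hν1 (Eventually.of_forall fun x => norm_nonneg x),
        ← hsnd, lintegral_map (by fun_prop) measurable_snd]
    have key : ENNReal.ofReal (∫ x, ‖x‖ ∂μ) ≤
        (∫⁻ z, ENNReal.ofReal (‖z.1 - z.2‖ ^ p) ∂π') + ENNReal.ofReal (∫ x, ‖x‖ ∂ν) + 1 := by
      rw [e1, e2]
      have e3 : (1 : ENNReal) = ∫⁻ _, 1 ∂π' := by simp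
      conv_rhs => rw [e3]
      rw [← lintegral_add_left (by fun_prop), ← lintegral_add_right _ (by fun_prop)]
      refine lintegral_mono fun z => ?_
      have h1 : ‖z.1 - z.2‖ ≤ ‖z.1 - z.2‖ ^ p + 1 := by
        have h0 := Real.rpow_nonneg (norm_nonneg (z.1 - z.2)) p
        rcases le_total ‖z.1 - z.2‖ 1 with h | h
        · linarith
        · have := Real.rpow_le_rpow_of_exponent_le h hp1
          rw [Real.rpow_one] at this
          linarith
      have h2 : ‖z.1‖ ≤ ‖z.1 - z.2‖ ^ p + ‖z.2‖ + 1 := by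
        have := norm_le_norm_sub_add z.1 z.2
        linarith
      refine (ENNReal.ofReal_le_ofReal h2).trans ?_
      rw [ENNReal.ofReal_add (by positivity) zero_le_one,
        ENNReal.ofReal_add (by positivity) (norm_nonneg _), ENNReal.ofReal_one]
    have h3 := (ENNReal.ofReal_le_ofReal h).trans key
    rw [ENNReal.ofReal_add (by positivity) zero_le_one, ENNReal.ofReal_add hA hM,
      ENNReal.ofReal_one] at h3
    exact (ENNReal.add_le_add_iff_right ENNReal.ofReal_ne_top).1
      ((ENNReal.add_le_add_iff_right ENNReal.one_ne_top).1 h3)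
  rw [← ENNReal.toReal_rpow]
  refine Real.rpow_le_rpow hA ?_ (by positivity)
  exact (ENNReal.ofReal_le_iff_le_toReal hKtop).1 hAK

/-- Instability of the LSI in `W_p` for `p ∈ [1,2)`: the deficit can vanish while
`W_p(μ_k,γ) → ∞`. -/
theorem lsi_instability_Wp_plt2 (n : ℕ) (hn : 1 ≤ n) (p : ℝ) (hp1 : 1 ≤ p) (hp2 : p < 2) :
    ∃ f : ℕ → En n → ℝ,
      (∀ k x, 0 ≤ f k x) ∧
      (∀ k, IsProbabilityMeasure (densMeasure (f k))) ∧
      (∀ k, IsCentered (densMeasure (f k))) ∧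
      (∀ k, Integrable (fun x => ‖x‖ ^ (2 : ℝ)) (densMeasure (f k))) ∧
      Tendsto (fun k => lsiDeficit (f k)) atTop (𝓝 0) ∧
      Tendsto (fun k => wasserstein p (densMeasure (f k)) (stdGauss n)) atTop atTop := by
  -- Weights `1 - t`, `t` at `-t R e` and `(1 - t) R e`: the barycenter is `0`, the centers are at
  -- distance `R`, and `t R → ∞` forces the first moment to diverge although `t → 0`.
  obtain ⟨e, he⟩ : ∃ e : En n, ‖e‖ = 1 := ⟨EuclideanSpace.single ⟨0, hn⟩ 1, by simp⟩
  set t : ℕ → ℝ := fun k => 1 / ((k : ℝ) + 2) with ht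
  set R : ℕ → ℝ := fun k => ((k : ℝ) + 2) ^ 2 with hR
  set b : ℕ → En n := fun k => (-(t k * R k)) • e with hb
  set c : ℕ → En n := fun k => ((1 - t k) * R k) • e with hc
  have ht0 : ∀ k, 0 < t k := fun k => by simp only [ht]; positivity
  have ht1 : ∀ k, t k < 1 := fun k => by
    simp only [ht]
    rw [div_lt_one (by positivity)]
    linarith [(Nat.cast_nonneg k : (0 : ℝ) ≤ k)]
  have hbc : ∀ k, ‖b k - c k‖ = R k := fun k => by
    simp only [hb, hc]
    rw [← sub_smul, norm_smul, he, mul_one,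
      show -(t k * R k) - (1 - t k) * R k = -R k by ring, norm_neg]
    exact Real.norm_of_nonneg (by simp only [hR]; positivity)
  have htc : ∀ k, t k * ‖c k‖ = k + 1 := fun k => by
    simp only [hc]
    rw [norm_smul, he, mul_one, Real.norm_of_nonneg
      (mul_nonneg (by linarith [ht1 k]) (by simp only [hR]; positivity))]
    simp only [ht, hR]
    field_simp
    ring
  have hnat : Tendsto (fun k : ℕ => (k : ℝ)) atTop atTop := tendsto_natCast_atTop_atTop
  refine ⟨fun k => mixDensity (t k) (b k) (c k),
    fun k x => (mixDensity_pos (ht0 k) (ht1 k) _ _ x).le,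
    fun k => isProbabilityMeasure_mix (ht0 k) (ht1 k) _ _, fun k => ?_, fun k => ?_, ?_, ?_⟩
  · unfold IsCentered
    rw [integral_id_mix (ht0 k) (ht1 k)]
    simp only [hb, hc]
    rw [smul_smul, smul_smul, ← add_smul]
    convert zero_smul ℝ e using 2
    ring
  · simp_rw [Real.rpow_two]
    exact integrable_sq_norm_mix (ht0 k) (ht1 k) _ _
  · have hRtop : Tendsto (fun k => R k ^ 2 / 8) atTop atTop := by
      have h2 : Tendsto (fun k : ℕ => (k : ℝ) + 2) atTop atTop :=
        tendsto_atTop_add_const_right _ _ hnat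
      have := (tendsto_pow_atTop (α := ℝ) (n := 4) (by norm_num)).comp h2
      refine (this.atTop_div_const (by norm_num : (0 : ℝ) < 8)).congr fun k => ?_
      simp only [hR, Function.comp_apply]
      ring
    have hlow : Tendsto (fun k => -(Real.exp (-‖b k - c k‖ ^ 2 / 8) * ‖b k - c k‖ ^ 2) / 2)
        atTop (𝓝 0) := by
      have h1 := ((Real.tendsto_pow_mul_exp_neg_atTop_nhds_zero 1).comp hRtop).const_mul (-4)
      rw [mul_zero] at h1
      refine h1.congr fun k => ?_
      rw [hbc]
      simp only [Function.comp_apply, neg_div]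
      ring
    have hup : Tendsto (fun k => binEntropy (t k)) atTop (𝓝 0) := by
      have h0 : Tendsto t atTop (𝓝 0) :=
        (tendsto_const_nhds (x := (1 : ℝ))).div_atTop (tendsto_atTop_add_const_right _ _ hnat)
      have := (binEntropy_continuous.tendsto 0).comp h0
      rwa [binEntropy_zero] at this
    exact tendsto_of_tendsto_of_tendsto_of_le_of_le hlow hup
      (fun k => (lsiDeficit_mix_mem (ht0 k) (ht1 k) _ _).1)
      (fun k => (lsiDeficit_mix_mem (ht0 k) (ht1 k) _ _).2)
  · set M := ∫ x, ‖x‖ ∂(stdGauss n) with hM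
    have hlim : Tendsto (fun k : ℕ => ((k : ℝ) + (-M)) ^ (1 / p)) atTop atTop :=
      (tendsto_rpow_atTop (by positivity)).comp (tendsto_atTop_add_const_right _ _ hnat)
    refine tendsto_atTop_mono' _ ?_ hlim
    filter_upwards [hnat.eventually_ge_atTop M] with k hk
    have := isProbabilityMeasure_mix (ht0 k) (ht1 k) (b k) (c k)
    refine le_wasserstein hp1 hp2.le _ _ (integrable_sq_norm_mix (ht0 k) (ht1 k) _ _)
      (integrable_sq_norm_stdGauss n) (integrable_norm_mix (ht0 k) (ht1 k) _ _)
      (integrable_id_stdGauss n).norm (by linarith) ?_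
    have h1 := le_integral_norm_mix (ht0 k) (ht1 k) (b k) (c k)
    rw [htc] at h1
    linarith
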